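/- There exist fixed natural numbers m and s such that there is no algorithm (no computable function) which, given arrays of integers a = (a^{i,j}_q) indexed by 1 ≤ i < j ≤ s and 1 ≤ q ≤ m, and b = (b_1,…,b_m), decides whether there exist integers x_1,…,x_s satisfying ∑_{1 ≤ i < j ≤ s} a^{i,j}_q · x_i · x_j = b_q for every 1 ≤ q ≤ m. Formally: there exist m, s such that the predicate (SYM) on pairs (a,b) is not a computable predicate with respect to the standard encoding of finite integer arrays. -/

import Mathlib

/-- The property (SYM): there are integers `x 1, …, x s` such that
`∑_{1 ≤ i < j ≤ s} a q i j * x i * x j = b q` for every `q`. -/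
def SYM (m s : ℕ) (a : Fin m → Fin s → Fin s → ℤ) (b : Fin m → ℤ) : Prop :=
  ∃ x : Fin s → ℤ, ∀ q : Fin m,
    (∑ i : Fin s, ∑ j : Fin s, if i < j then a q i j * (x i * x j) else 0) = b q

/-!
An r.e. predicate reduces to (SYM) with fixed coefficients, the input entering only through `b`.

Graphs of partial recursive functions are Diophantine, by induction on `Nat.Partrec`: Gödel's
β function turns primitive recursion and unbounded search into existential and bounded universal
quantifiers. A bounded quantifier `∀ k < y, ∃ t, P k t = 0` is eliminated by choosing `C` with
`(Q !) ^ 2 ∣ C + 1` for a large `Q`. Then `C.choose y` is the product of the pairwise coprime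
factors `(C - k) / (k + 1)`, all of whose prime divisors exceed `Q`, and `C ≡ k` modulo the `k`-th
one. By the Chinese remainder theorem the witnesses for all `k < y` are the residues of a single
`a`, and the single condition `C.choose y ∣ P C a` replaces the `y` equations. Conversely, if also
`C.choose y ∣ a * (a - 1) * ⋯ * (a - u)`, then modulo a prime divisor `p` of the `k`-th factor `a`
is some `t ≤ u`, and `p ∣ P k t` gives `P k t = 0` because `|P k t| ≤ Q < p`.

Lagrange's four squares theorem passes from `ℕ` to `ℤ`, and auxiliary variables for subterms bring
the degree down to two. Homogenized, each equation becomes the bilinear one `y ⬝ᵥ M *ᵥ z = b`, where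
`y 0 * z 0 = 1` and `y 0 * z i = y i * z 0` force `y` and `z` to be inverse multiples of the same
vector `(1, x)`. Listing the variables `y` before `z`, a bilinear form only contains products
`x i * x j` with `i < j`.
-/

open MvPolynomial Matrix
open scoped Nat

section Arithmetic

theorem ofDigits_map_range (b : ℕ) (f : ℕ → ℕ) (n : ℕ) :
    Nat.ofDigits b ((List.range n).map f) = ∑ i ∈ Finset.range n, f i * b ^ i := by
  induction n with
  | zero => simp
  | succ n ih => simp [List.range_succ, Nat.ofDigits_append, ih, Finset.sum_range_succ, mul_comm]

theorem choose_eq_pow_div_mod {b n : ℕ} (hb : 2 ^ n < b) (k : ℕ) :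
    n.choose k = (b + 1) ^ n / b ^ k % b := by
  have hb_two : 2 ≤ b := Nat.one_le_two_pow.trans_lt hb
  have h_digits : b.digits ((b + 1) ^ n) = (List.range (n + 1)).map n.choose := by
    have h_sum : (b + 1) ^ n = Nat.ofDigits b ((List.range (n + 1)).map n.choose) := by
      simp [ofDigits_map_range, add_pow, mul_comm]
    rw [h_sum, Nat.digits_ofDigits b hb_two]
    · simpa using fun i _ => (Nat.choose_le_two_pow n i).trans_lt hb
    · simp [List.range_succ]
  rw [← Nat.getD_digits _ _ hb_two, h_digits]
  rcases lt_or_ge n k with hk | hk <;> grind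

theorem one_sub_sq_div_mul_pow_le_descFactorial {n r : ℕ} (h : n ≤ r) :
    (1 - n ^ 2 / r : ℚ) * r ^ n ≤ r.descFactorial n := by
  rcases r.eq_zero_or_pos with rfl | hr
  · simp [Nat.le_zero.1 h]
  have hr' : (0 : ℚ) < r := by exact_mod_cast hr
  have h_ratio : (n / r : ℚ) ≤ 1 := by rw [div_le_one hr']; exact_mod_cast h
  calc (1 - n ^ 2 / r : ℚ) * r ^ n
      = (1 + n * -(n / r)) * r ^ n := by ring
    _ ≤ (1 + -(n / r)) ^ n * r ^ n := by gcongr; exact one_add_mul_le_pow (by linarith) n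
    _ = (r - n : ℕ) ^ n := by rw [← mul_pow]; push_cast [h]; congr 1; field_simp; ring
    _ ≤ r.descFactorial n := by
      exact_mod_cast (Nat.pow_le_pow_left (by omega) n).trans (Nat.pow_sub_le_descFactorial r n)

theorem factorial_eq_pow_div_choose {n r : ℕ} (h : n ^ 2 * (n ! + 1) < r) :
    n ! = r ^ n / r.choose n := by
  have h_desc : r.descFactorial n = n ! * r.choose n :=
    Nat.descFactorial_eq_factorial_mul_choose r n
  have hr : (0 : ℚ) < r := by exact_mod_cast Nat.zero_lt_of_lt h
  have h_sq : n ^ 2 ≤ n ^ 2 * (n ! + 1) := Nat.le_mul_of_pos_right _ (by positivity)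
  have hnr : n ≤ r := (Nat.le_self_pow two_ne_zero n).trans (h_sq.trans h.le)
  have h_small : (n ^ 2 / r : ℚ) * (n ! + 1) < 1 := by
    rw [div_mul_eq_mul_div, div_lt_one hr]
    exact_mod_cast h
  have h_upper : (r ^ n * n ! : ℚ) < n ! * r.choose n * (n ! + 1) := calc
    (r ^ n * n ! : ℚ) < (1 - n ^ 2 / r) * r ^ n * (n ! + 1) := by
      linarith [mul_lt_mul_of_pos_right h_small (pow_pos hr n)]
    _ ≤ r.descFactorial n * (n ! + 1) := by
      gcongr; exact one_sub_sq_div_mul_pow_le_descFactorial hnr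
    _ = n ! * r.choose n * (n ! + 1) := by rw [h_desc]; push_cast; rfl
  refine (Nat.div_eq_of_lt_le (h_desc ▸ Nat.descFactorial_le_pow r n) ?_).symm
  refine lt_of_mul_lt_mul_right (a := n !) ?_ (Nat.zero_le _)
  rw [mul_right_comm, mul_comm (n ! + 1)]
  exact_mod_cast (by linarith : (r ^ n * n ! : ℚ) < n ! * (n ! + 1) * r.choose n)

end Arithmetic

section Functions
open Dioph Vector3
variable {α : Type} {f g : (α → ℕ) → ℕ}

theorem choose_dioph (df : DiophFn f) (dg : DiophFn g) :
    DiophFn fun v => (f v).choose (g v) := by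
  have h_base : DiophFn fun v => 2 ^ f v + 1 := pow_dioph (D.2) df D+ D.1
  simp_rw [fun v => choose_eq_pow_div_mod (Nat.lt_succ_self (2 ^ f v)) (g v)]
  exact (pow_dioph (h_base D+ D.1) df D/ pow_dioph h_base dg) D% h_base

theorem factorial_dioph (df : DiophFn f) : DiophFn fun v => (f v)! := by
  have h_bound (n : ℕ) : n ^ 2 * (n ! + 1) < n ^ 2 * (n ^ n + 1) + 1 :=
    Nat.lt_succ_of_le (by gcongr; exact Nat.factorial_le_pow n)
  have h_large : DiophFn fun v => f v ^ 2 * (f v ^ f v + 1) + 1 :=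
    pow_dioph df (D.2) D* (pow_dioph df df D+ D.1) D+ D.1
  simp_rw [fun v => factorial_eq_pow_div_choose (h_bound (f v))]
  exact pow_dioph h_large df D/ choose_dioph h_large df

theorem descFactorial_dioph (df : DiophFn f) (dg : DiophFn g) :
    DiophFn fun v => (f v).descFactorial (g v) := by
  simp_rw [Nat.descFactorial_eq_factorial_mul_choose]
  exact factorial_dioph dg D* choose_dioph df dg

theorem pair_dioph (df : DiophFn f) (dg : DiophFn g) : DiophFn fun v => Nat.pair (f v) (g v) :=
  diophFn_comp2 df dg <| (diophFn_vec _).2 <| ext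
    ((D&1 D< D&2 D∧ D&2 D* D&2 D+ D&1 D= D&0) D∨ (D&2 D≤ D&1 D∧ D&1 D* D&1 D+ D&1 D+ D&2 D= D&0)) <|
    (vectorAll_iff_forall _).1 fun n a b =>
      show (a < b ∧ b * b + a = n) ∨ (b ≤ a ∧ a * a + a + b = n) ↔ Nat.pair a b = n by
        grind [Nat.pair]

theorem unpair_fst_dioph (df : DiophFn f) : DiophFn fun v => (f v).unpair.1 :=
  diophFn_comp (f := fun v : Vector3 ℕ 1 => (v &0).unpair.1) (g := [f]) ((diophFn_vec _).2 <| ext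
    ((D∃) 2 <| pair_dioph (D&1) (D&0) D= D&2) <|
    (vectorAll_iff_forall _).1 fun a n =>
      show (∃ b, Nat.pair a b = n) ↔ n.unpair.1 = a by grind [Nat.pair_unpair, Nat.unpair_pair]) df

theorem unpair_snd_dioph (df : DiophFn f) : DiophFn fun v => (f v).unpair.2 :=
  diophFn_comp (f := fun v : Vector3 ℕ 1 => (v &0).unpair.2) (g := [f]) ((diophFn_vec _).2 <| ext
    ((D∃) 2 <| pair_dioph (D&0) (D&1) D= D&2) <|
    (vectorAll_iff_forall _).1 fun b n =>
      show (∃ a, Nat.pair a b = n) ↔ n.unpair.2 = b by grind [Nat.pair_unpair, Nat.unpair_pair]) df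

theorem beta_dioph (df : DiophFn f) (dg : DiophFn g) : DiophFn fun v => Nat.beta (f v) (g v) :=
  unpair_fst_dioph df D% ((dg D+ D.1) D* unpair_snd_dioph df D+ D.1)

end Functions

section Polynomials
variable {σ : Type*}

theorem isPoly_iff_exists_mvPolynomial {f : (σ → ℕ) → ℤ} :
    IsPoly f ↔ ∃ p : MvPolynomial σ ℤ, ∀ v, f v = eval (Nat.cast ∘ v) p := by
  constructor
  · intro hf
    induction hf with
    | proj i => exact ⟨X i, by simp⟩
    | const n => exact ⟨C n, by simp⟩
    | sub _ _ ihf ihg =>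
      obtain ⟨p, hp⟩ := ihf
      obtain ⟨q, hq⟩ := ihg
      exact ⟨p - q, by simp [hp, hq]⟩
    | mul _ _ ihf ihg =>
      obtain ⟨p, hp⟩ := ihf
      obtain ⟨q, hq⟩ := ihg
      exact ⟨p * q, by simp [hp, hq]⟩
  · rintro ⟨p, hp⟩
    rw [funext hp]
    induction p using MvPolynomial.induction_on generalizing f with
    | C n => simpa using IsPoly.const n
    | add p q ihp ihq => simpa using! (ihp fun _ => rfl).add (ihq fun _ => rfl)
    | mul_X p i ihp => simpa using! (ihp fun _ => rfl).mul (IsPoly.proj i)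

theorem exists_mvPolynomial_fin_of_dioph {α : Type} {S : Set (α → ℕ)} (hS : Dioph S) :
    ∃ (n : ℕ) (p : MvPolynomial (α ⊕ Fin n) ℤ), ∀ v, v ∈ S ↔
      ∃ t : Fin n → ℕ, eval (Nat.cast ∘ Sum.elim v t) p = 0 := by
  obtain ⟨β, ⟨f, hf⟩, hS⟩ := hS
  obtain ⟨p, hp⟩ := isPoly_iff_exists_mvPolynomial.1 hf
  obtain ⟨n, g, hg, q, rfl⟩ := exists_fin_rename p
  let r (k : Fin n) : α ⊕ Fin n := Sum.elim Sum.inl (fun _ => Sum.inr k) (g k)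
  have h_restrict (v : α → ℕ) (t : β → ℕ) :
      Sum.elim v t ∘ g = Sum.elim v (Sum.elim v t ∘ g) ∘ r := by
    ext k; cases h : g k <;> simp [r, h]
  have h_extend (v : α → ℕ) (t : Fin n → ℕ) :
      Sum.elim v (Function.extend g t 0 ∘ Sum.inr) ∘ g = Sum.elim v t ∘ r := by
    ext k; cases h : g k
    · simp [r, h]
    · simpa [r, h] using hg.extend_apply t 0 k
  have h_eval (v : α → ℕ) (t : β → ℕ) :
      f (Sum.elim v t) = eval (Nat.cast ∘ Sum.elim v t ∘ g) q := by
    simpa [eval_rename] using! hp (Sum.elim v t)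
  refine ⟨n, rename r q, fun v => (hS v).trans ?_⟩
  change (∃ t, f (Sum.elim v t) = 0) ↔ ∃ t, _
  simp only [h_eval, eval_rename]
  exact ⟨fun ⟨t, ht⟩ => ⟨Sum.elim v t ∘ g, by rw [h_restrict] at ht; exact ht⟩,
    fun ⟨t, ht⟩ => ⟨Function.extend g t 0 ∘ Sum.inr, by rw [h_extend]; exact ht⟩⟩

theorem eval_modEq (p : MvPolynomial σ ℤ) {v w : σ → ℤ} {m : ℤ} (h : ∀ i, v i ≡ w i [ZMOD m]) :
    eval v p ≡ eval w p [ZMOD m] := by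
  induction p using MvPolynomial.induction_on with
  | C n => simp [Int.ModEq.refl]
  | add p q ihp ihq => simpa using ihp.add ihq
  | mul_X p i ihp => simpa using ihp.mul (h i)

theorem exists_abs_eval_le_eval {R : Type*} [CommRing R] [LinearOrder R] [IsStrictOrderedRing R]
    (p : MvPolynomial σ R) :
    ∃ q : MvPolynomial σ R, ∀ v w : σ → R, (∀ i, |v i| ≤ w i) → |eval v p| ≤ eval w q := by
  induction p using MvPolynomial.induction_on with
  | C r => exact ⟨C |r|, by simp⟩
  | add p q ihp ihq =>
    obtain ⟨p', hp⟩ := ihp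
    obtain ⟨q', hq⟩ := ihq
    refine ⟨p' + q', fun v w h => ?_⟩
    simpa using (abs_add_le _ _).trans (add_le_add (hp v w h) (hq v w h))
  | mul_X p i ihp =>
    obtain ⟨p', hp⟩ := ihp
    refine ⟨p' * X i, fun v w h => ?_⟩
    simpa [abs_mul] using
      mul_le_mul (hp v w h) (h i) (abs_nonneg _) ((abs_nonneg _).trans (hp v w h))

end Polynomials

section BoundedQuantifier

theorem exists_modEq_of_prime_dvd_descFactorial {p a u : ℕ} (hp : p.Prime)
    (h : p ∣ a.descFactorial (u + 1)) : ∃ t ≤ u, t ≡ a [MOD p] := by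
  rcases le_or_gt a u with hau | hua
  · exact ⟨a, hau, rfl⟩
  rw [Nat.descFactorial_eq_prod_range, hp.prime.dvd_finsetProd_iff] at h
  obtain ⟨t, ht, hdvd⟩ := h
  have htu : t ≤ u := Finset.mem_range_succ_iff.1 ht
  exact ⟨t, htu, (Nat.modEq_iff_dvd' (htu.trans hua.le)).2 hdvd⟩

theorem dvd_descFactorial_of_modEq {m a t u : ℕ} (htu : t ≤ u) (h : t ≡ a [MOD m]) :
    m ∣ a.descFactorial (u + 1) := by
  rcases le_or_gt a u with hau | hua
  · exact (Nat.descFactorial_of_lt (Nat.lt_succ_of_le hau)) ▸ dvd_zero m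
  rw [Nat.descFactorial_eq_prod_range]
  exact ((Nat.modEq_iff_dvd' (htu.trans hua.le)).1 h).trans
    (Finset.dvd_prod_of_mem _ (Finset.mem_range_succ_iff.2 htu))

variable {C Q y k : ℕ}

/-- The factor `(C - k) / (k + 1)` of the product `C.choose y = ∏ k < y, (C - k) / (k + 1)`. When
`k + 1` divides `C + 1` the division is exact, and the factor serves as a modulus for which `C` is
congruent to `k`. -/
def chooseFactor (C k : ℕ) : ℕ := (C - k) / (k + 1)

theorem succ_mul_chooseFactor (h : k + 1 ∣ C + 1) : (k + 1) * chooseFactor C k = C - k :=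
  Nat.mul_div_cancel' (by simpa using Nat.dvd_sub h dvd_rfl)

theorem succ_mul_chooseFactor_add_one (h : k + 1 ∣ C + 1) :
    (k + 1) * (chooseFactor C k + 1) = C + 1 := by
  have hk : k + 1 ≤ C + 1 := Nat.le_of_dvd (Nat.succ_pos C) h
  rw [mul_add, succ_mul_chooseFactor h]
  omega

theorem modEq_chooseFactor (h : k + 1 ∣ C + 1) : k ≡ C [MOD chooseFactor C k] := by
  have hk : k ≤ C := Nat.le_of_succ_le_succ (Nat.le_of_dvd (Nat.succ_pos C) h)
  exact (Nat.modEq_iff_dvd' hk).2 (succ_mul_chooseFactor h ▸ dvd_mul_left ..)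

theorem prod_chooseFactor (h : ∀ k < y, k + 1 ∣ C + 1) :
    ∏ k ∈ Finset.range y, chooseFactor C k = C.choose y := by
  induction y with
  | zero => simp
  | succ y ih =>
    have hy := succ_mul_chooseFactor (h y y.lt_succ_self)
    refine mul_right_cancel₀ y.succ_ne_zero ?_
    rw [Finset.prod_range_succ, ih fun k hk => h k (hk.trans y.lt_succ_self),
      Nat.choose_succ_right_eq, ← hy, Nat.succ_eq_add_one]
    ring

theorem succ_dvd_of_factorial_sq_dvd (hC : Q ! ^ 2 ∣ C + 1) (hk : k < Q) : k + 1 ∣ C + 1 :=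
  (Nat.dvd_factorial k.succ_pos hk).trans ((dvd_pow_self _ two_ne_zero).trans hC)

theorem factorial_dvd_chooseFactor_add_one (hC : Q ! ^ 2 ∣ C + 1) (hk : k < Q) :
    Q ! ∣ chooseFactor C k + 1 := by
  refine Nat.dvd_of_mul_dvd_mul_left k.succ_pos ?_
  rw [succ_mul_chooseFactor_add_one (succ_dvd_of_factorial_sq_dvd hC hk)]
  exact (mul_dvd_mul_right (Nat.dvd_factorial k.succ_pos hk) _).trans (sq (Q !) ▸ hC)

theorem lt_of_prime_dvd_chooseFactor {p : ℕ} (hC : Q ! ^ 2 ∣ C + 1) (hk : k < Q) (hp : p.Prime)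
    (h : p ∣ chooseFactor C k) : Q < p := by
  by_contra! hpQ
  have h_succ := (Nat.dvd_factorial hp.pos hpQ).trans (factorial_dvd_chooseFactor_add_one hC hk)
  exact hp.one_lt.ne' (Nat.dvd_one.1 ((Nat.dvd_add_right h).1 h_succ))

theorem one_lt_chooseFactor (hQ : 2 < Q) (hC : Q ! ^ 2 ∣ C + 1) (hk : k < Q) :
    1 < chooseFactor C k := by
  have h_le := Nat.le_of_dvd (Nat.succ_pos _) (factorial_dvd_chooseFactor_add_one hC hk)
  have := Nat.self_le_factorial Q
  omega

theorem coprime_chooseFactor {i j : ℕ} (hC : Q ! ^ 2 ∣ C + 1) (hij : i < j) (hj : j < Q) :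
    (chooseFactor C i).Coprime (chooseFactor C j) := by
  refine Nat.coprime_of_dvd fun p hp hpi hpj => ?_
  have h_modEq : i ≡ j [MOD p] :=
    ((modEq_chooseFactor (succ_dvd_of_factorial_sq_dvd hC (hij.trans hj))).of_dvd hpi).trans
      ((modEq_chooseFactor (succ_dvd_of_factorial_sq_dvd hC hj)).of_dvd hpj).symm
  have h_le : p ≤ j - i := Nat.le_of_dvd (by omega) ((Nat.modEq_iff_dvd' hij.le).1 h_modEq)
  have h_lt : Q < p := lt_of_prime_dvd_chooseFactor hC hj hp hpj
  omega

theorem pairwise_coprime_chooseFactor (hC : Q ! ^ 2 ∣ C + 1) (hyQ : y ≤ Q) :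
    (Finset.range y : Set ℕ).Pairwise (Function.onFun Nat.Coprime (chooseFactor C)) := by
  intro i hi j hj hij
  simp only [Finset.coe_range, Set.mem_Iio] at hi hj
  rcases hij.lt_or_gt with h | h
  · exact coprime_chooseFactor hC h (hj.trans_le hyQ)
  · exact (coprime_chooseFactor hC h (hi.trans_le hyQ)).symm

theorem choose_dvd_iff (hC : Q ! ^ 2 ∣ C + 1) (hyQ : y ≤ Q) {b : ℕ} :
    C.choose y ∣ b ↔ ∀ k < y, chooseFactor C k ∣ b := by
  rw [← prod_chooseFactor fun k hk => succ_dvd_of_factorial_sq_dvd hC (hk.trans_le hyQ)]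
  constructor
  · exact fun h k hk => (Finset.dvd_prod_of_mem _ (Finset.mem_range.2 hk)).trans h
  · exact fun h => Finset.prod_dvd_of_isRelPrime
      ((pairwise_coprime_chooseFactor hC hyQ).imp fun i j => Nat.coprime_iff_isRelPrime.1)
      fun k hk => h k (Finset.mem_range.1 hk)

variable {ι : Type*} {P : ℕ → (ι → ℕ) → ℤ} {a : ι → ℕ} {u : ℕ}

theorem exists_eq_zero_of_choose_dvd
    (hP : ∀ m k l s t, k ≡ l [MOD m] → (∀ i, s i ≡ t i [MOD m]) → P k s ≡ P l t [ZMOD m])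
    (hQ : 2 < Q) (hyQ : y ≤ Q) (hC : Q ! ^ 2 ∣ C + 1) (hbound : ∀ t, (∀ i, t i ≤ u) → |P k t| ≤ Q)
    (ha : ∀ i, C.choose y ∣ (a i).descFactorial (u + 1)) (hPa : C.choose y ∣ (P C a).natAbs)
    (hk : k < y) : ∃ t, P k t = 0 := by
  have hkQ : k < Q := hk.trans_le hyQ
  obtain ⟨p, hp, hpk⟩ := Nat.exists_prime_and_dvd (one_lt_chooseFactor hQ hC hkQ).ne'
  have hp_dvd {b : ℕ} (h : C.choose y ∣ b) : p ∣ b := hpk.trans ((choose_dvd_iff hC hyQ).1 h k hk)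
  choose t htu hta using fun i => exists_modEq_of_prime_dvd_descFactorial hp (hp_dvd (ha i))
  have h_modEq : P k t ≡ P C a [ZMOD p] :=
    hP p k C t a ((modEq_chooseFactor (succ_dvd_of_factorial_sq_dvd hC hkQ)).of_dvd hpk) hta
  have h_zero : (p : ℤ) ∣ P k t := Int.modEq_zero_iff_dvd.1 <|
    h_modEq.trans (Int.modEq_zero_iff_dvd.2 (Int.natCast_dvd.2 (hp_dvd hPa)))
  refine ⟨t, Int.eq_zero_of_abs_lt_dvd h_zero ((hbound t htu).trans_lt ?_)⟩
  exact_mod_cast lt_of_prime_dvd_chooseFactor hC hkQ hp hpk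

theorem exists_choose_dvd_of_forall_eq_zero
    (hP : ∀ m k l s t, k ≡ l [MOD m] → (∀ i, s i ≡ t i [MOD m]) → P k s ≡ P l t [ZMOD m])
    (hQ : 2 < Q) (hyQ : y ≤ Q) (hC : Q ! ^ 2 ∣ C + 1) {t : ℕ → ι → ℕ}
    (htu : ∀ k < y, ∀ i, t k i ≤ u) (ht : ∀ k < y, P k (t k) = 0) :
    ∃ a : ι → ℕ, (∀ i, C.choose y ∣ (a i).descFactorial (u + 1)) ∧
      C.choose y ∣ (P C a).natAbs := by
  have h_ne_zero : ∀ k ∈ Finset.range y, chooseFactor C k ≠ 0 := fun k hk =>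
    Nat.ne_zero_of_lt (one_lt_chooseFactor hQ hC ((Finset.mem_range.1 hk).trans_le hyQ))
  choose a ha using fun i => (Nat.chineseRemainderOfFinset (fun k => t k i) (chooseFactor C)
    (Finset.range y) h_ne_zero (pairwise_coprime_chooseFactor hC hyQ)).exists_of_subtype
  simp only [Finset.mem_range] at ha
  refine ⟨a, fun i => (choose_dvd_iff hC hyQ).2 fun k hk =>
    dvd_descFactorial_of_modEq (htu k hk i) (ha i k hk).symm,
    (choose_dvd_iff hC hyQ).2 fun k hk => ?_⟩
  have h_modEq : P C a ≡ P k (t k) [ZMOD chooseFactor C k] :=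
    hP _ C k a (t k) (modEq_chooseFactor (succ_dvd_of_factorial_sq_dvd hC (hk.trans_le hyQ))).symm
      fun i => ha i k hk
  rw [ht k hk] at h_modEq
  exact Int.natCast_dvd.1 (Int.modEq_zero_iff_dvd.1 h_modEq)

theorem forall_lt_exists_eq_zero_iff [Finite ι] {B : ℕ → ℕ}
    (hP : ∀ m k l s t, k ≡ l [MOD m] → (∀ i, s i ≡ t i [MOD m]) → P k s ≡ P l t [ZMOD m])
    (hB : ∀ k < y, ∀ u t, (∀ i, t i ≤ u) → |P k t| ≤ B u) :
    (∀ k < y, ∃ t, P k t = 0) ↔ ∃ (a : ι → ℕ) (u C : ℕ), (y + B u + 3)! ^ 2 = C + 1 ∧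
      (∀ i, C.choose y ∣ (a i).descFactorial (u + 1)) ∧ C.choose y ∣ (P C a).natAbs := by
  constructor
  · intro h
    choose! t ht using h
    obtain ⟨u, hu⟩ : ∃ u, ∀ k < y, ∀ i, t k i ≤ u := by
      obtain ⟨u, hu⟩ := (((Set.finite_Iio y).prod (Set.finite_univ (α := ι))).image
        fun x => t x.1 x.2).bddAbove
      exact ⟨u, fun k hk i => hu ⟨(k, i), by simpa using hk, rfl⟩⟩
    obtain ⟨C, hC⟩ := Nat.exists_eq_add_one.2 (pow_pos (y + B u + 3).factorial_pos 2)
    obtain ⟨a, ha, hPa⟩ :=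
      exists_choose_dvd_of_forall_eq_zero hP (by omega) (by omega) (dvd_of_eq hC) hu ht
    exact ⟨a, u, C, hC, ha, hPa⟩
  · rintro ⟨a, u, C, hC, ha, hPa⟩ k hk
    refine exists_eq_zero_of_choose_dvd hP (by omega) (by omega) (dvd_of_eq hC)
      (fun t ht => (hB k hk u t ht).trans ?_) ha hPa hk
    push_cast
    omega

end BoundedQuantifier

section BoundedDioph
open Dioph
variable {α : Type}

theorem natAbs_eval_dioph {σ : Type} (p : MvPolynomial σ ℤ) {e : (α → ℕ) → σ → ℕ}
    (he : ∀ i, ∃ j, ∀ v, e v i = v j) : DiophFn fun v => (eval (Nat.cast ∘ e v) p).natAbs := by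
  choose g hg using he
  obtain rfl : e = fun v => v ∘ g := funext₂ fun v i => hg i v
  exact abs_poly_dioph ⟨_, isPoly_iff_exists_mvPolynomial.2 ⟨rename g p, fun v => by
    simp [eval_rename, Function.comp_assoc]⟩⟩

theorem forall_fin_dioph {n : ℕ} {S : Fin n → Set (α → ℕ)} (hS : ∀ i, Dioph (S i)) :
    Dioph {v | ∀ i, v ∈ S i} :=
  (DiophList.forall (List.ofFn S) (by simpa [List.forall_iff_forall_mem] using hS)).ext
    fun v => by simp [List.forall_iff_forall_mem]

theorem exists_dioph {β : Type} {P : (α → ℕ) → (β → ℕ) → Prop}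
    (hP : Dioph {w : α ⊕ β → ℕ | P (w ∘ Sum.inl) (w ∘ Sum.inr)}) : Dioph {v | ∃ t, P v t} :=
  ex_dioph hP

theorem exists_nat_dioph {P : (α → ℕ) → ℕ → Prop}
    (hP : Dioph {w : Option α → ℕ | P (w ∘ some) (w none)}) : Dioph {v | ∃ x, P v x} :=
  ex1_dioph hP

theorem comp_dioph {P : (α → ℕ) → ℕ → Prop} {f : (α → ℕ) → ℕ}
    (hP : Dioph {w : Option α → ℕ | P (w ∘ some) (w none)}) (df : DiophFn f) :
    Dioph {v | P v (f v)} :=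
  diophFn_comp1 hP df

theorem exists_choose_dvd_dioph {n : ℕ} (p q : MvPolynomial (Option α ⊕ Fin n) ℤ) :
    Dioph {w : Option α → ℕ | ∃ (a : Fin n → ℕ) (u C : ℕ),
      (w none + (eval (Nat.cast ∘ Sum.elim w fun _ => u) q).natAbs + 3)! ^ 2 = C + 1 ∧
      (∀ i, C.choose (w none) ∣ (a i).descFactorial (u + 1)) ∧
      C.choose (w none) ∣
        (eval (Nat.cast ∘ Sum.elim (Option.elim' C (w ∘ some)) a) p).natAbs} := by
  refine exists_dioph (exists_nat_dioph (exists_nat_dioph ?_))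
  have dC : DiophFn fun w : Option (Option (Option α ⊕ Fin n)) → ℕ => w none := proj_dioph _
  have du : DiophFn fun w : Option (Option (Option α ⊕ Fin n)) → ℕ => w (some none) := proj_dioph _
  have dy : DiophFn fun w : Option (Option (Option α ⊕ Fin n)) → ℕ =>
    w (some (some (Sum.inl none))) := proj_dioph _
  refine (pow_dioph (factorial_dioph (dy D+ natAbs_eval_dioph q ?_ D+ D.3)) (D.2) D= dC D+ D.1) D∧
    (forall_fin_dioph fun i => choose_dioph dC dy D∣
      descFactorial_dioph (proj_dioph (some (some (Sum.inr i)))) (du D+ D.1)) D∧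
    choose_dioph dC dy D∣ natAbs_eval_dioph p ?_
  · rintro (i | i)
    exacts [⟨_, fun _ => rfl⟩, ⟨_, fun _ => rfl⟩]
  · rintro ((_ | i) | i)
    exacts [⟨_, fun _ => rfl⟩, ⟨_, fun _ => rfl⟩, ⟨_, fun _ => rfl⟩]

theorem forall_lt_proj_dioph {P : (α → ℕ) → ℕ → Prop}
    (hP : Dioph {w : Option α → ℕ | P (w ∘ some) (w none)}) :
    Dioph {w : Option α → ℕ | ∀ k < w none, P (w ∘ some) k} := by
  obtain ⟨n, p, hp⟩ := exists_mvPolynomial_fin_of_dioph hP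
  obtain ⟨q, hq⟩ := exists_abs_eval_le_eval p
  let F (v : α → ℕ) (k : ℕ) (t : Fin n → ℕ) : ℤ :=
    eval (Nat.cast ∘ Sum.elim (Option.elim' k v) t) p
  let B (w : Option α → ℕ) (u : ℕ) : ℕ := (eval (Nat.cast ∘ Sum.elim w fun _ => u) q).natAbs
  have hF (v m k l s t) (hkl : k ≡ l [MOD m]) (hst : ∀ i, s i ≡ t i [MOD m]) :
      F v k s ≡ F v l t [ZMOD m] := by
    refine eval_modEq p ?_
    rintro ((_ | i) | i)
    exacts [Int.natCast_modEq_iff.2 hkl, rfl, Int.natCast_modEq_iff.2 (hst i)]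
  have hB (w : Option α → ℕ) :
      ∀ k < w none, ∀ u t, (∀ i, t i ≤ u) → |F (w ∘ some) k t| ≤ B w u := by
    intro k hk u t ht
    refine (hq _ (Nat.cast ∘ Sum.elim w fun _ => u) ?_).trans Int.le_natAbs
    rintro ((_ | i) | i)
    exacts [by simpa using hk.le, by simp, by simpa using ht i]
  have h_iff (w : Option α → ℕ) := forall_lt_exists_eq_zero_iff (hF (w ∘ some)) (hB w)
  have h_zero (v k) : P v k ↔ ∃ t, F v k t = 0 := hp (Option.elim' k v)
  simp only [h_zero, h_iff]
  exact exists_choose_dvd_dioph p q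

theorem forall_lt_dioph {P : (α → ℕ) → ℕ → Prop} {f : (α → ℕ) → ℕ}
    (hP : Dioph {w : Option α → ℕ | P (w ∘ some) (w none)}) (df : DiophFn f) :
    Dioph {v | ∀ k < f v, P v k} :=
  comp_dioph (P := fun v y => ∀ k < y, P v k) (forall_lt_proj_dioph hP) df

end BoundedDioph

section DiophGraph
open Dioph Vector3
variable {f g : ℕ →. ℕ}

/-- The graph of a partial function on `ℕ` is a Diophantine set of pairs. -/
def DiophGraph (f : ℕ →. ℕ) : Prop :=
  Dioph {v : Vector3 ℕ 2 | v &1 ∈ f (v &0)}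

namespace DiophGraph

theorem mem_dioph (hf : DiophGraph f) {α : Type} {s t : (α → ℕ) → ℕ} (ds : DiophFn s)
    (dt : DiophFn t) : Dioph {v | t v ∈ f (s v)} :=
  dioph_comp2 (S := fun x y => y ∈ f x) ds dt hf

theorem of_diophFn {f : ℕ → ℕ} (df : DiophFn fun v : Vector3 ℕ 2 => f (v &0)) :
    DiophGraph (f : ℕ →. ℕ) :=
  ((D&1) D= df).ext fun _ => Part.mem_some_iff.symm

theorem pair (hf : DiophGraph f) (hg : DiophGraph g) :
    DiophGraph fun n => Nat.pair <$> f n <*> g n := by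
  have dn : DiophFn fun w : Option (Option (Fin2 2)) → ℕ => w (some (some &0)) := proj_dioph _
  have dx : DiophFn fun w : Option (Option (Fin2 2)) → ℕ => w (some (some &1)) := proj_dioph _
  have da : DiophFn fun w : Option (Option (Fin2 2)) → ℕ => w (some none) := proj_dioph _
  have db : DiophFn fun w : Option (Option (Fin2 2)) → ℕ => w none := proj_dioph _
  have h_graph : Dioph {v : Vector3 ℕ 2 |
      ∃ a b, a ∈ f (v &0) ∧ b ∈ g (v &0) ∧ Nat.pair a b = v &1} :=
    exists_nat_dioph <| exists_nat_dioph <|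
      hf.mem_dioph dn da D∧ hg.mem_dioph dn db D∧ pair_dioph da db D= dx
  exact h_graph.ext fun v => by simp [Seq.seq]

theorem comp (hf : DiophGraph f) (hg : DiophGraph g) : DiophGraph fun n => g n >>= f :=
  have h_graph : Dioph {v : Vector3 ℕ 2 | ∃ a, a ∈ g (v &0) ∧ v &1 ∈ f a} :=
    exists_nat_dioph <| hg.mem_dioph (proj_dioph (some &0)) (proj_dioph none) D∧
      hf.mem_dioph (proj_dioph none) (proj_dioph (some &1))
  h_graph.ext fun _ => Part.mem_bind_iff.symm

theorem mem_rec_iff_exists_beta {a n x : ℕ} :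
    x ∈ (Nat.rec (f a) (fun k IH => IH >>= fun i => g (Nat.pair a (Nat.pair k i))) n : Part ℕ) ↔
      ∃ b, Nat.beta b 0 ∈ f a ∧
        (∀ k < n, Nat.beta b (k + 1) ∈ g (Nat.pair a (Nat.pair k (Nat.beta b k)))) ∧
        x = Nat.beta b n := by
  constructor
  · intro hx
    obtain ⟨s, hs, rfl⟩ : ∃ s : ℕ → ℕ, (s 0 ∈ f a ∧
        ∀ k < n, s (k + 1) ∈ g (Nat.pair a (Nat.pair k (s k)))) ∧ x = s n := by
      induction n generalizing x with
      | zero => exact ⟨fun _ => x, ⟨hx, by simp⟩, rfl⟩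
      | succ n ih =>
        obtain ⟨i, hi, hx⟩ := Part.mem_bind_iff.1 hx
        obtain ⟨s, ⟨h_zero, h_succ⟩, rfl⟩ := ih hi
        refine ⟨Function.update s (n + 1) x, ⟨by simpa, fun k hk => ?_⟩, by simp⟩
        rcases Nat.lt_succ_iff_lt_or_eq.1 hk with hk | rfl
        · grind
        · simpa
    obtain ⟨b, hb⟩ : ∃ b, ∀ k ≤ n, Nat.beta b k = s k := by
      let l := (List.range (n + 1)).map s
      refine ⟨Nat.unbeta l, fun k hk => ?_⟩
      simpa [l] using Nat.beta_unbeta_coe l ⟨k, by simpa [l, Nat.lt_succ_iff] using hk⟩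
    grind
  · rintro ⟨b, h_zero, h_succ, rfl⟩
    induction n with
    | zero => exact h_zero
    | succ n ih =>
      exact Part.mem_bind_iff.2
        ⟨_, ih fun k hk => h_succ k (hk.trans n.lt_succ_self), h_succ n n.lt_succ_self⟩

theorem prec (hf : DiophGraph f) (hg : DiophGraph g) :
    DiophGraph (Nat.unpaired fun a n =>
      n.rec (f a) fun k IH => do let i ← IH; g (Nat.pair a (Nat.pair k i))) := by
  have dn : DiophFn fun w : Option (Fin2 2) → ℕ => w (some &0) := proj_dioph _
  have dx : DiophFn fun w : Option (Fin2 2) → ℕ => w (some &1) := proj_dioph _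
  have db : DiophFn fun w : Option (Fin2 2) → ℕ => w none := proj_dioph _
  have dn' : DiophFn fun w : Option (Option (Fin2 2)) → ℕ => w (some (some &0)) := proj_dioph _
  have db' : DiophFn fun w : Option (Option (Fin2 2)) → ℕ => w (some none) := proj_dioph _
  have dk : DiophFn fun w : Option (Option (Fin2 2)) → ℕ => w none := proj_dioph _
  refine .ext (exists_nat_dioph ?_) fun v => mem_rec_iff_exists_beta.symm
  exact hf.mem_dioph (unpair_fst_dioph dn) (beta_dioph db (D.0)) D∧
    forall_lt_dioph (hg.mem_dioph
      (pair_dioph (unpair_fst_dioph dn') (pair_dioph dk (beta_dioph db' dk)))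
      (beta_dioph db' (dk D+ D.1))) (unpair_snd_dioph dn) D∧
    dx D= beta_dioph db (unpair_snd_dioph dn)

theorem rfind (hf : DiophGraph f) :
    DiophGraph fun a => Nat.rfind fun n => (fun m => m = 0) <$> f (Nat.pair a n) := by
  have h_graph : Dioph {v : Vector3 ℕ 2 | 0 ∈ f (Nat.pair (v &0) (v &1)) ∧
      ∀ k < v &1, ∃ z, z ∈ f (Nat.pair (v &0) k) ∧ z ≠ 0} :=
    hf.mem_dioph (pair_dioph (D&0) (D&1)) (D.0) D∧
      forall_lt_dioph (exists_nat_dioph <|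
        hf.mem_dioph (pair_dioph (proj_dioph (some (some &0))) (proj_dioph (some none)))
          (proj_dioph none) D∧ proj_dioph none D≠ D.0) (D&1)
  exact h_graph.ext fun v => .trans (show _ ∧ _ ↔ _ by simp) Nat.mem_rfind.symm

theorem of_partrec (hf : Nat.Partrec f) : DiophGraph f := by
  induction hf with
  | zero => exact .of_diophFn (D.0)
  | succ => exact .of_diophFn (D&0 D+ D.1)
  | left => exact .of_diophFn (unpair_fst_dioph (D&0))
  | right => exact .of_diophFn (unpair_snd_dioph (D&0))
  | pair _ _ ihf ihg => exact ihf.pair ihg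
  | comp _ _ ihf ihg => exact ihf.comp ihg
  | prec _ _ ihf ihg => exact ihf.prec ihg
  | rfind _ ihf => exact ihf.rfind

end DiophGraph

theorem exists_dioph_manyOneReducible_of_rePred {β : Type*} [Primcodable β] {p : β → Prop}
    (hp : REPred p) : ∃ q : ℕ → Prop, Dioph {v : Unit → ℕ | q (v ())} ∧ p ≤₀ q := by
  obtain ⟨f, hf, h_dom⟩ : ∃ f : ℕ →. ℕ, Nat.Partrec f ∧
      ∀ b : β, p b ↔ (f (Encodable.encode b)).Dom :=
    ⟨_, hp, fun b => by simp [Part.assert]⟩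
  refine ⟨fun n => (f n).Dom, ?_, Encodable.encode, Computable.encode, h_dom⟩
  simp only [Part.dom_iff_mem]
  exact exists_nat_dioph <|
    (DiophGraph.of_partrec hf).mem_dioph (proj_dioph (some ())) (proj_dioph none)

end DiophGraph

section Systems
variable {R ι σ : Type*} [CommSemiring R]

/-- The polynomial system `F i = b i` over `R` has a solution in `R`. -/
def SystemSolvable (F : ι → MvPolynomial σ R) (b : ι → R) : Prop :=
  ∃ x : σ → R, ∀ i, eval x (F i) = b i

theorem exists_nat_iff_exists_sum_four_sq {P : (σ → ℤ) → Prop} :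
    (∃ t : σ → ℕ, P (Nat.cast ∘ t)) ↔ ∃ x : σ × Fin 4 → ℤ, P fun i => ∑ k, x (i, k) ^ 2 := by
  constructor
  · rintro ⟨t, ht⟩
    choose a b c d h using fun i => Nat.sum_four_squares (t i)
    refine ⟨fun i => ![a i.1, b i.1, c i.1, d i.1] i.2, ?_⟩
    convert! ht with i
    simpa [Fin.sum_univ_four] using congrArg (Nat.cast : ℕ → ℤ) (h i)
  · rintro ⟨x, hx⟩
    have h_nonneg (i : σ) : 0 ≤ ∑ k, x (i, k) ^ 2 := Finset.sum_nonneg fun k _ => sq_nonneg _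
    lift (fun i => ∑ k, x (i, k) ^ 2) to σ → ℕ using h_nonneg with t
    exact ⟨t, hx⟩

theorem eval_bind₁ {τ : Type*} (x : τ → R) (f : σ → MvPolynomial τ R)
    (p : MvPolynomial σ R) : eval x (bind₁ f p) = eval (fun i => eval x (f i)) p :=
  eval₂Hom_bind₁ ..

theorem eval_join₁ (x : σ → R) (g : MvPolynomial (MvPolynomial σ R) R) :
    eval x (join₁ g) = eval (fun p => eval x p) g :=
  eval_bind₁ ..

theorem totalDegree_X_le (i : σ) : (X i : MvPolynomial σ R).totalDegree ≤ 1 :=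
  (totalDegree_monomial_le _ _).trans (by simp)

theorem exists_system_of_dioph {q : ℕ → Prop} (hq : Dioph {v : Unit → ℕ | q (v ())}) :
    ∃ (σ : Type) (F : Fin 2 → MvPolynomial σ ℤ), ∀ N : ℕ, q N ↔ SystemSolvable F ![(N : ℤ), 0] := by
  obtain ⟨n, p, hp⟩ := exists_mvPolynomial_fin_of_dioph hq
  let sq (i : Unit ⊕ Fin n) : MvPolynomial ((Unit ⊕ Fin n) × Fin 4) ℤ := ∑ k, X (i, k) ^ 2
  refine ⟨_, ![sq (Sum.inl ()), bind₁ sq p], fun N => ?_⟩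
  calc q N ↔ ∃ t : Fin n → ℕ, eval (Nat.cast ∘ Sum.elim (fun _ => N) t) p = 0 := hp fun _ => N
    _ ↔ ∃ s : Unit ⊕ Fin n → ℕ, (s (Sum.inl ()) : ℤ) = N ∧ eval (Nat.cast ∘ s) p = 0 := by
      constructor
      · exact fun ⟨t, ht⟩ => ⟨_, rfl, ht⟩
      · rintro ⟨s, hs, hps⟩
        obtain rfl := Nat.cast_injective hs
        exact ⟨s ∘ Sum.inr, by rwa [← Sum.elim_comp_inl_inr s] at hps⟩
    _ ↔ ∃ x : (Unit ⊕ Fin n) × Fin 4 → ℤ, ∑ k, x (Sum.inl (), k) ^ 2 = N ∧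
          eval (fun i => ∑ k, x (i, k) ^ 2) p = 0 :=
      exists_nat_iff_exists_sum_four_sq (P := fun y => y (Sum.inl ()) = N ∧ eval y p = 0)
    _ ↔ SystemSolvable ![sq (Sum.inl ()), bind₁ sq p] ![(N : ℤ), 0] := by
      simp [SystemSolvable, Fin.forall_fin_two, sq, eval_bind₁]

theorem totalDegree_X_mul_X_le (i j : σ) : (X i * X j : MvPolynomial σ R).totalDegree ≤ 2 :=
  (totalDegree_mul _ _).trans (add_le_add (totalDegree_X_le i) (totalDegree_X_le j))

/-- The new variables are indexed by polynomials, and `T` forces the variable of each subterm `q` of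
`p` to take the value of `q`. -/
theorem exists_quadratic_relations {R : Type*} [CommRing R] (p : MvPolynomial σ R) :
    ∃ T : Set (MvPolynomial (MvPolynomial σ R) R), T.Finite ∧
      (∀ g ∈ T, g.totalDegree ≤ 2 ∧ join₁ g = 0) ∧
      ∀ y : MvPolynomial σ R → R, (∀ g ∈ T, eval y g = 0) → y p = eval (fun i => y (X i)) p := by
  have h_X (p : MvPolynomial σ R) : join₁ (X p) = p := aeval_X _ _
  have h_deg (p : MvPolynomial σ R) : (X p : MvPolynomial _ R).totalDegree ≤ 1 := totalDegree_X_le p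
  induction p using MvPolynomial.induction_on with
  | C r =>
    refine ⟨{X (C r) - C r}, Set.finite_singleton _, ?_, fun y hy => ?_⟩
    · rintro _ rfl
      exact ⟨(totalDegree_sub_C_le _ _).trans ((h_deg _).trans one_le_two), by simp [h_X]⟩
    · simpa [sub_eq_zero] using hy
  | add p q ihp ihq =>
    obtain ⟨S, hS_fin, hS, hyS⟩ := ihp
    obtain ⟨T, hT_fin, hT, hyT⟩ := ihq
    refine ⟨insert (X (p + q) - X p - X q) (S ∪ T), (hS_fin.union hT_fin).insert _, ?_,
      fun y hy => ?_⟩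
    · rintro _ (rfl | hg | hg)
      · have := totalDegree_sub (X (p + q) - X p) (X q : MvPolynomial _ R)
        have := totalDegree_sub (X (p + q)) (X p : MvPolynomial _ R)
        exact ⟨by grind, by simp [h_X]⟩
      exacts [hS _ hg, hT _ hg]
    · simp only [Set.forall_mem_insert, Set.mem_union, or_imp, forall_and, map_sub, eval_X] at hy
      rw [map_add, ← hyS y hy.2.1, ← hyT y hy.2.2]
      linear_combination hy.1
  | mul_X p i ih =>
    obtain ⟨T, hT_fin, hT, hyT⟩ := ih
    refine ⟨insert (X (p * X i) - X p * X (X i)) T, hT_fin.insert _, ?_, fun y hy => ?_⟩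
    · rintro _ (rfl | hg)
      · have := totalDegree_sub (X (p * X i)) (X p * X (X i) : MvPolynomial _ R)
        have := totalDegree_X_mul_X_le (R := R) p (X i)
        exact ⟨by grind, by simp [h_X]⟩
      exact hT _ hg
    · simp only [Set.forall_mem_insert, map_sub, map_mul, eval_X] at hy
      rw [map_mul, eval_X, ← hyT y hy.2]
      linear_combination hy.1

theorem exists_quadratic_system {R : Type*} [CommRing R] {k : ℕ} (F : Fin k → MvPolynomial σ R) :
    ∃ (l : ℕ) (G : Fin (k + l) → MvPolynomial (MvPolynomial σ R) R),
      (∀ q, (G q).totalDegree ≤ 2) ∧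
      ∀ b, SystemSolvable F b ↔ SystemSolvable G (Fin.append b 0) := by
  choose T hT_fin hT hyT using fun q => exists_quadratic_relations (F q)
  obtain ⟨l, g, -, hg⟩ := (Set.finite_iUnion hT_fin).fin_param
  have hgT (j : Fin l) : (g j).totalDegree ≤ 2 ∧ join₁ (g j) = 0 := by
    obtain ⟨q, hq⟩ := Set.mem_iUnion.1 (hg ▸ Set.mem_range_self j)
    exact hT q _ hq
  refine ⟨l, Fin.append (fun q => X (F q)) g, ?_, fun b => ?_⟩
  · rw [Fin.forall_fin_add (fun q => (Fin.append (fun q => X (F q)) g q).totalDegree ≤ 2)]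
    simp only [Fin.append_left, Fin.append_right]
    exact ⟨fun q => (totalDegree_X_le _).trans one_le_two, fun j => (hgT j).1⟩
  · simp only [SystemSolvable, Fin.forall_fin_add (fun q => eval _ (Fin.append _ g q) = _),
      Fin.append_left, Fin.append_right, eval_X, Pi.zero_apply]
    constructor
    · rintro ⟨x, hx⟩
      exact ⟨fun p => eval x p, hx, fun j => by rw [← eval_join₁, (hgT j).2, map_zero]⟩
    · rintro ⟨y, hy, hyg⟩
      refine ⟨fun i => y (X i), fun q => ?_⟩
      rw [← hyT q y, hy]
      intro p hp
      obtain ⟨j, rfl⟩ : p ∈ Set.range g := hg ▸ Set.mem_iUnion.2 ⟨q, hp⟩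
      exact hyg j

theorem totalDegree_rename_of_injective {τ : Type*} {f : σ → τ} (hf : Function.Injective f)
    (p : MvPolynomial σ R) : (rename f p).totalDegree = p.totalDegree := by
  classical
  simp [totalDegree_eq, support_rename_of_injective hf, Finset.sup_image, Function.comp_def,
    ← Finsupp.toMultiset_map, -Finsupp.card_toMultiset]

theorem exists_fin_system [Finite ι] (G : ι → MvPolynomial σ R) :
    ∃ (n : ℕ) (H : ι → MvPolynomial (Fin n) R),
      (∀ i, (H i).totalDegree = (G i).totalDegree) ∧
      ∀ b, SystemSolvable G b ↔ SystemSolvable H b := by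
  obtain ⟨n, f, hf, h_range⟩ := (Set.finite_iUnion fun i => (G i).vars.finite_toSet).fin_param
  choose H hH using fun i => exists_rename_eq_of_vars_subset_range (G i) f hf
    (h_range ▸ Set.subset_iUnion (fun i => ((G i).vars : Set σ)) i)
  obtain rfl := funext hH
  refine ⟨n, H, fun i => (totalDegree_rename_of_injective hf _).symm, fun b => ?_⟩
  simp only [SystemSolvable, eval_rename]
  refine ⟨fun ⟨x, hx⟩ => ⟨x ∘ f, hx⟩, fun ⟨x, hx⟩ => ⟨Function.extend f x 0, ?_⟩⟩
  rwa [show Function.extend f x 0 ∘ f = x from funext (hf.extend_apply x 0)]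

theorem exists_prod_pow_eq_mul {n : ℕ} {d : Fin n →₀ ℕ} (hd : d.sum (fun _ e => e) ≤ 2) :
    ∃ i j : Fin (n + 1), ∀ x : Fin n → R,
      d.prod (fun k e => x k ^ e) = vecCons 1 x i * vecCons 1 x j := by
  have h_prod (x : Fin n → R) : d.prod (fun k e => x k ^ e) = (d.toMultiset.map x).prod := by
    rw [Finsupp.toMultiset_map, Finsupp.prod_toMultiset,
      Finsupp.prod_mapDomain_index pow_zero pow_add]
  simp only [h_prod]
  have h_card : d.toMultiset.card ≤ 2 := by rwa [Finsupp.card_toMultiset]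
  rcases h : d.toMultiset.card with _ | _ | _ | k
  · exact ⟨0, 0, by simp [Multiset.card_eq_zero.1 h]⟩
  · obtain ⟨i, hi⟩ := Multiset.card_eq_one.1 h
    exact ⟨i.succ, 0, by simp [hi]⟩
  · obtain ⟨i, j, hij⟩ := Multiset.card_eq_two.1 h
    exact ⟨i.succ, j.succ, by simp [hij]⟩
  · omega

theorem dotProduct_single_mulVec {κ : Type*} [Fintype κ] [DecidableEq κ] (y z : κ → R)
    (i j : κ) (c : R) : y ⬝ᵥ single i j c *ᵥ z = y i * (c * z j) := by
  simp [single_mulVec_eq, mul_comm]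

theorem exists_matrix_of_totalDegree_le_two {n : ℕ} {p : MvPolynomial (Fin n) R}
    (hp : p.totalDegree ≤ 2) : ∃ M : Matrix (Fin (n + 1)) (Fin (n + 1)) R,
      ∀ x, eval x p = vecCons 1 x ⬝ᵥ M *ᵥ vecCons 1 x := by
  choose! i j hij using fun d => exists_prod_pow_eq_mul (R := R) (n := n) (d := d)
  refine ⟨∑ d ∈ p.support, single (i d) (j d) (p.coeff d), fun x => ?_⟩
  rw [eval_eq, sum_mulVec, dotProduct_sum]
  refine Finset.sum_congr rfl fun d hd => ?_
  calc p.coeff d * ∏ k ∈ d.support, x k ^ d k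
      = p.coeff d * (vecCons 1 x (i d) * vecCons 1 x (j d)) := by
        rw [← hij d ((le_totalDegree hd).trans hp) x]; rfl
    _ = vecCons 1 x ⬝ᵥ single (i d) (j d) (p.coeff d) *ᵥ vecCons 1 x := by
        rw [dotProduct_single_mulVec, mul_left_comm]

/-- The bilinear system `y ⬝ᵥ B i *ᵥ z = b i` over `R` has a solution in `R`. -/
def BilinearSolvable {κ κ' : Type*} [Fintype κ] [Fintype κ'] (B : ι → Matrix κ κ' R)
    (b : ι → R) : Prop :=
  ∃ (y : κ → R) (z : κ' → R), ∀ i, y ⬝ᵥ B i *ᵥ z = b i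

theorem exists_eq_smul_vecCons_one {R : Type*} [CommRing R] {n : ℕ}
    {y z : Fin (n + 1) → R} (h_zero : y 0 * z 0 = 1)
    (h_succ : ∀ i : Fin n, y 0 * z i.succ = y i.succ * z 0) :
    ∃ x : Fin n → R, y = y 0 • vecCons 1 x ∧ z = z 0 • vecCons 1 x := by
  refine ⟨fun i => z 0 * y i.succ, funext (Fin.cases (by simp) fun i => ?_),
    funext (Fin.cases (by simp) fun i => ?_)⟩
  · simp only [Pi.smul_apply, cons_val_succ, smul_eq_mul]
    linear_combination -y i.succ * h_zero
  · simp only [Pi.smul_apply, cons_val_succ, smul_eq_mul]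
    linear_combination z 0 * h_succ i - z i.succ * h_zero

theorem exists_bilinear_system {R : Type*} [CommRing R] {m n : ℕ}
    {G : Fin m → MvPolynomial (Fin n) R} (hG : ∀ q, (G q).totalDegree ≤ 2) :
    ∃ B : Fin (m + (n + 1)) → Matrix (Fin (n + 1)) (Fin (n + 1)) R, ∀ b,
      SystemSolvable G b ↔ BilinearSolvable B (Fin.append b (vecCons 1 0)) := by
  choose M hM using fun q => exists_matrix_of_totalDegree_le_two (hG q)
  refine ⟨Fin.append M (vecCons (single 0 0 1) fun i => single 0 i.succ 1 - single i.succ 0 1),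
    fun b => ?_⟩
  simp only [SystemSolvable, BilinearSolvable, hM, Fin.append_left, Fin.append_right,
    Fin.forall_fin_add (fun q => _ ⬝ᵥ Fin.append M _ q *ᵥ _ = _), Fin.forall_fin_succ,
    cons_val_zero, cons_val_succ, dotProduct_single_mulVec, sub_mulVec, dotProduct_sub, one_mul,
    sub_eq_zero, Pi.zero_apply]
  constructor
  · rintro ⟨x, hx⟩
    exact ⟨vecCons 1 x, vecCons 1 x, hx, by simp, by simp⟩
  · rintro ⟨y, z, hyz, h_zero, h_succ⟩
    obtain ⟨x, hy, hz⟩ := exists_eq_smul_vecCons_one h_zero h_succ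
    refine ⟨x, fun q => ?_⟩
    rw [← hyz q, hy, hz, mulVec_smul, smul_dotProduct, dotProduct_smul, smul_smul, h_zero, one_smul]

theorem bilinearSolvable_iff_SYM {m n n' : ℕ} (B : Fin m → Matrix (Fin n) (Fin n') ℤ)
    (b : Fin m → ℤ) : BilinearSolvable B b ↔ SYM m (n + n')
      (fun q => (fromBlocks 0 (B q) 0 0).reindex finSumFinEquiv finSumFinEquiv) b := by
  have h_lt (i : Fin n) (j : Fin n') : Fin.castAdd n' i < Fin.natAdd n j := by
    simp only [Fin.lt_def, Fin.val_castAdd, Fin.val_natAdd]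
    omega
  have h_sum (x : Fin (n + n') → ℤ) (q : Fin m) :
      (∑ i, ∑ j, if i < j then (fromBlocks 0 (B q) 0 0).reindex finSumFinEquiv finSumFinEquiv i j *
        (x i * x j) else 0) = (x ∘ Fin.castAdd n') ⬝ᵥ B q *ᵥ (x ∘ Fin.natAdd n) := by
    simp [Fin.sum_univ_add, dotProduct, mulVec, Finset.mul_sum, h_lt, mul_left_comm]
  simp only [SYM, h_sum]
  constructor
  · rintro ⟨y, z, h⟩
    exact ⟨Fin.append y z, by simpa [Function.comp_def] using h⟩
  · exact fun ⟨x, h⟩ => ⟨_, _, h⟩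

end Systems

section Reduction
variable {α τ : Type*} [Primcodable α] [Primcodable τ] {m n : ℕ}

theorem primrec_natCast_int : Primrec (Nat.cast : ℕ → ℤ) :=
  Primrec.encode_iff.1 <| (Primrec.nat_mul.comp (Primrec.const 2) Primrec.id).of_eq fun _ => rfl

theorem primrec_fin_pi {f : α → Fin n → τ} (hf : ∀ i, Primrec fun a => f a i) : Primrec f :=
  Primrec.fin_curry.2 ((Primrec.fin_curry₁ (f := fun i a => f a i)).2 hf).swap

theorem primrec_append_const {f : α → Fin m → τ} (hf : Primrec f) (c : Fin n → τ) :
    Primrec fun a => Fin.append (f a) c := by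
  refine primrec_fin_pi fun i => ?_
  cases i using Fin.addCases with
  | left i => simpa using Primrec.fin_app.comp hf (Primrec.const i)
  | right i => simpa using Primrec.const (c i)

theorem exists_manyOneReducible_SYM_of_rePred {p : α → Prop} (hp : REPred p) :
    ∃ (m s : ℕ) (a : Fin m → Fin s → Fin s → ℤ), p ≤₀ SYM m s a := by
  obtain ⟨q, hq, hpq⟩ := exists_dioph_manyOneReducible_of_rePred hp
  obtain ⟨_, F, hF⟩ := exists_system_of_dioph hq
  obtain ⟨l, G, hG_deg, hG⟩ := exists_quadratic_system F
  obtain ⟨n, H, hH_deg, hH⟩ := exists_fin_system G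
  obtain ⟨B, hB⟩ := exists_bilinear_system fun i => (hH_deg i).trans_le (hG_deg i)
  have h_primrec : Primrec fun N : ℕ => ![(N : ℤ), 0] :=
    primrec_fin_pi <| Fin.forall_fin_two.2 ⟨primrec_natCast_int, Primrec.const 0⟩
  refine ⟨_, _, fun q => (fromBlocks 0 (B q) 0 0).reindex finSumFinEquiv finSumFinEquiv,
    hpq.trans ⟨fun N => Fin.append (Fin.append ![(N : ℤ), 0] 0) (vecCons 1 0),
      (primrec_append_const (primrec_append_const h_primrec 0) _).to_comp, fun N => ?_⟩⟩
  exact (hF N).trans <| (hG _).trans <| (hH _).trans <| (hB _).trans (bilinearSolvable_iff_SYM B _)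

end Reduction

theorem sym_undecidable_general :
    ∃ (m s : ℕ) (a : Fin m → Fin s → Fin s → ℤ), ¬ ComputablePred (SYM m s a) := by
  obtain ⟨m, s, a, h⟩ :=
    exists_manyOneReducible_SYM_of_rePred (ComputablePred.halting_problem_re 0)
  exact ⟨m, s, a, fun hSYM =>
    ComputablePred.halting_problem 0 (hSYM.computable_of_manyOneReducible h)⟩

/-- There exist fixed `m, s` such that the predicate (SYM) on pairs of integer arrays
`(a, b)` is not computable. -/
theorem sym_undecidable :
    ∃ m s : ℕ, ¬ ComputablePred
      (fun p : (Fin m → Fin s → Fin s → ℤ) × (Fin m → ℤ) => SYM m s p.1 p.2) := by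
  obtain ⟨m, s, a, ha⟩ := sym_undecidable_general
  exact ⟨m, s, fun h => ha (h.computable_of_manyOneReducible
    ⟨fun b => (a, b), ((Primrec.const a).pair Primrec.id).to_comp, fun _ => Iff.rfl⟩)⟩
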